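/- The map φ : ℝ^{r+1} → ℝ^r, given by orthogonal projection of ℝ^{r+1} onto the hyperplane H_𝟙 := {x ∈ ℝ^{r+1} : 𝟙ᵀx = 0} followed by the projection to the first r coordinates, is injective on C^{r+1}_* := {−1,+1}^{r+1} \ {−𝟙, 𝟙}. -/

import Mathlib

open Finset Filter MeasureTheory

open scoped Classical

noncomputable section

/-- The vertex set `{0,1}^d` of the 0/1-cube, as a finite subset of `ℝ^d`. -/
def cube01 (d : ℕ) : Finset (Fin d → ℝ) :=
  (Finset.univ : Finset (Fin d → Bool)).image (fun f i => if f i then 1 else 0)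

/-- The vertex set `{-1,+1}^d` of the `±1`-cube, as a finite subset of `ℝ^d`. -/
def pmCube (d : ℕ) : Finset (Fin d → ℝ) :=
  (Finset.univ : Finset (Fin d → Bool)).image (fun f i => if f i then 1 else -1)

/-- The all-one vector `𝟙 ∈ ℝ^d`. -/
def allOne (d : ℕ) : Fin d → ℝ := fun _ => 1

/-- `C^d_* = {-1,+1}^d \ {-𝟙, 𝟙}`. -/
def pmCubeStar (d : ℕ) : Finset (Fin d → ℝ) :=
  (pmCube d) \ {-(allOne d), allOne d}

/-- `{v,w}` spans an edge (a one-dimensional face) of the polytope `P`: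
`v ≠ w` and the segment `[v,w]` is an (exposed) face of `P`. -/
def IsEdge {d : ℕ} (P : Set (Fin d → ℝ)) (v w : Fin d → ℝ) : Prop :=
  v ≠ w ∧ IsExposed ℝ P (segment ℝ v w)

/-- The number of edges of the graph of the polytope `conv X`. -/
noncomputable def edgeCount {d : ℕ} (X : Finset (Fin d → ℝ)) : ℕ :=
  ((X.powersetCard 2).filter (fun e =>
      ∃ v w, e = {v, w} ∧ IsEdge (convexHull ℝ (X : Set (Fin d → ℝ))) v w)).card

/-- The density of the graph of the polytope `conv X` (whose vertex set is `X`
when `X` consists of 0/1- or `±1`-points): number of edges divided by `C(|X|,2)`. -/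
noncomputable def graphDensity {d : ℕ} (X : Finset (Fin d → ℝ)) : ℝ :=
  (edgeCount X : ℝ) / (X.card.choose 2 : ℝ)

/-- The expected graph-density of the convex hull of a uniformly random
`n`-element subset of `{0,1}^d`. -/
noncomputable def expDensity (d n : ℕ) : ℝ :=
  (∑ X ∈ (cube01 d).powersetCard n, graphDensity X) /
    (((cube01 d).powersetCard n).card : ℝ)

/-- The Hamming distance of `v, w ∈ ℝ^d`. -/
def hdist {d : ℕ} (v w : Fin d → ℝ) : ℕ :=
  (Finset.univ.filter (fun i => v i ≠ w i)).card

/-- `C(v,w)`: the points of the `±1`-cube agreeing with `v` and `w` wherever these agree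
(the vertex set of the smallest face of the cube containing `v` and `w`). -/
def cubeFace {d : ℕ} (v w : Fin d → ℝ) : Finset (Fin d → ℝ) :=
  (pmCube d).filter (fun x => ∀ i, v i = w i → x i = v i)

/-- `C_*(v,w) = C(v,w) \ {v,w}`. -/
def cubeFaceStar {d : ℕ} (v w : Fin d → ℝ) : Finset (Fin d → ℝ) :=
  (cubeFace v w) \ {v, w}

/-- The long-edge probability `τ(k,m)`: the probability that for a uniformly random
`m`-element subset `Y ⊆ C^k_*`, `conv Y ∩ conv{-𝟙,𝟙} = ∅`. -/
noncomputable def tau (k m : ℕ) : ℝ :=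
  ((((pmCubeStar k).powersetCard m).filter (fun Y =>
      convexHull ℝ (Y : Set (Fin k → ℝ)) ∩ segment ℝ (-(allOne k)) (allOne k) = ∅)).card : ℝ) /
    ((((pmCubeStar k).powersetCard m)).card : ℝ)

/-- `Y ∩ (-Y) = ∅`. -/
def NoAntipodal {k : ℕ} (Y : Finset (Fin k → ℝ)) : Prop := ∀ y ∈ Y, -y ∉ Y

/-- `α(k,m)`: the conditional probability that `conv Y ∩ conv{-𝟙,𝟙} = ∅`
given `Y ∩ (-Y) = ∅`, for a uniformly random `m`-element subset `Y ⊆ C^k_*`. -/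
noncomputable def alpha (k m : ℕ) : ℝ :=
  ((((pmCubeStar k).powersetCard m).filter (fun (Y : Finset (Fin k → ℝ)) =>
      convexHull ℝ (Y : Set (Fin k → ℝ)) ∩ segment ℝ (-(allOne k)) (allOne k) = ∅ ∧
        NoAntipodal Y)).card : ℝ) /
    ((((pmCubeStar k).powersetCard m).filter (fun Y => NoAntipodal Y)).card : ℝ)

/-- The sample space for a uniformly random `n`-element subset `X ⊆ {-1,+1}^d`
together with a uniformly random `2`-element subset `{v,w} ⊆ X`. -/
def edgeSpace (d n : ℕ) : Finset (Finset (Fin d → ℝ) × Finset (Fin d → ℝ)) :=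
  (((pmCube d).powersetCard n) ×ˢ ((pmCube d).powersetCard 2)).filter (fun p => p.2 ⊆ p.1)

/-- The event that the chosen pair `{v,w}` is an edge of `conv X`. -/
def EdgeEvent {d : ℕ} (p : Finset (Fin d → ℝ) × Finset (Fin d → ℝ)) : Prop :=
  ∃ v w, p.2 = {v, w} ∧ IsEdge (convexHull ℝ (p.1 : Set (Fin d → ℝ))) v w

/-- The event that the chosen pair `{v,w}` satisfies `dist(v,w) = k`. -/
def DistEvent {d : ℕ} (k : ℕ) (p : Finset (Fin d → ℝ) × Finset (Fin d → ℝ)) : Prop :=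
  ∃ v w, v ≠ w ∧ p.2 = {v, w} ∧ hdist v w = k

/-- The event that the chosen pair `{v,w}` satisfies `dist(v,w) = k` and
`#(X ∩ C_*(v,w)) = m`. -/
def DistCapEvent {d : ℕ} (k m : ℕ) (p : Finset (Fin d → ℝ) × Finset (Fin d → ℝ)) : Prop :=
  ∃ v w, v ≠ w ∧ p.2 = {v, w} ∧ hdist v w = k ∧ (p.1 ∩ cubeFaceStar v w).card = m

/-- The edge probability `π(d,n)`. -/
noncomputable def piEdge (d n : ℕ) : ℝ :=
  (((edgeSpace d n).filter (fun p => EdgeEvent p)).card : ℝ) / ((edgeSpace d n).card : ℝ)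

/-- The conditional edge probability `π_k(d,n)` given `dist(v,w) = k`. -/
noncomputable def piEdgeK (d n k : ℕ) : ℝ :=
  (((edgeSpace d n).filter (fun p => EdgeEvent p ∧ DistEvent k p)).card : ℝ) /
    (((edgeSpace d n).filter (fun p => DistEvent k p)).card : ℝ)

/-- `φ : ℝ^{r+1} → ℝ^r`: the orthogonal projection onto the hyperplane
`H_𝟙 = {x : 𝟙ᵀx = 0}` (namely `x ↦ x - ((𝟙ᵀx)/(r+1))·𝟙`), followed by the
projection to the first `r` coordinates. -/
noncomputable def phi (r : ℕ) (x : Fin (r + 1) → ℝ) : Fin r → ℝ :=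
  fun i => x i.castSucc - (∑ j, x j) / (r + 1 : ℝ)

/-- The vector configuration `V_r = φ(C^{r+1}_*)`. -/
noncomputable def Vr (r : ℕ) : Finset (Fin r → ℝ) := (pmCubeStar (r + 1)).image (phi r)

/-- The half configuration `V_r^+ = φ({v ∈ C^{r+1}_* : v_{r+1} = +1})`. -/
noncomputable def VrPlus (r : ℕ) : Finset (Fin r → ℝ) :=
  (((pmCubeStar (r + 1)).filter (fun v => v (Fin.last r) = 1))).image (phi r)

/-- The number of sign vectors `ε ∈ {-1,+1}^S` with `0 ∉ conv{ε_s · s : s ∈ S}`. -/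
noncomputable def signCount {r : ℕ} (S : Finset (Fin r → ℝ)) : ℕ :=
  ((Finset.univ : Finset (↥S → Bool)).filter (fun ε =>
      (0 : Fin r → ℝ) ∉ convexHull ℝ
        (Set.range fun s : ↥S => (if ε s then (1 : ℝ) else -1) • (s : Fin r → ℝ)))).card

/-- `α(S)`: the probability that `0 ∉ conv{ε_s · s : s ∈ S}` for a uniformly random
sign vector `ε ∈ {-1,+1}^S`. -/
noncomputable def alphaSet {r : ℕ} (S : Finset (Fin r → ℝ)) : ℝ :=
  (signCount S : ℝ) / ((Finset.univ : Finset (↥S → Bool)).card : ℝ)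

/-- The complement `ℝ^r \ ⋃_{s ∈ S} H(s)` of the hyperplane arrangement `ℋ(S)`. -/
def arrComplement {r : ℕ} (S : Finset (Fin r → ℝ)) : Set (Fin r → ℝ) :=
  {x | ∀ s ∈ S, ∑ i, s i * x i ≠ 0}

/-- `χ(S)`: the number of chambers (connected components of the complement)
of the hyperplane arrangement `ℋ(S)`. -/
noncomputable def chi {r : ℕ} (S : Finset (Fin r → ℝ)) : ℕ :=
  Nat.card (ConnectedComponents ↥(arrComplement S))

/-- `b(p,q) = ∑_{i=0}^p C(q,i)`. -/
def bFn (p q : ℕ) : ℕ := ∑ i ∈ Finset.range (p + 1), q.choose i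

/-!
The kernel of `φ` is the line spanned by `𝟙`, so two points with the same image differ by `c • 𝟙`.
If `c > 0`, each coordinate of the first point exceeds the corresponding coordinate of the second;
when both are `±1`-vectors this makes the first point equal to `𝟙`. The case `c < 0` is symmetric.
-/

theorem mem_pmCube {d : ℕ} {x : Fin d → ℝ} : x ∈ pmCube d ↔ ∀ i, x i = 1 ∨ x i = -1 := by
  simp only [pmCube, Finset.mem_image, Finset.mem_univ, true_and]
  constructor
  · rintro ⟨f, rfl⟩ i
    exact ite_eq_or_eq _ _ _
  · intro hx
    refine ⟨fun i => decide (x i = 1), funext fun i => ?_⟩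
    rcases hx i with hi | hi <;> norm_num [hi]

theorem eq_allOne_of_forall_lt {d : ℕ} {x y : Fin d → ℝ} (hx : x ∈ pmCube d) (hy : y ∈ pmCube d)
    (hlt : ∀ i, y i < x i) : x = allOne d := by
  funext i
  refine (mem_pmCube.mp hx i).resolve_right fun hxi => ?_
  rcases mem_pmCube.mp hy i with hyi | hyi <;> linarith [hlt i]

theorem phi_sub (r : ℕ) (x y : Fin (r + 1) → ℝ) : phi r (x - y) = phi r x - phi r y := by
  funext i
  simp only [phi, Pi.sub_apply, Finset.sum_sub_distrib]
  ring

theorem phi_eq_zero_iff {r : ℕ} {x : Fin (r + 1) → ℝ} :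
    phi r x = 0 ↔ ∃ c : ℝ, x = c • allOne (r + 1) := by
  have hr : (r + 1 : ℝ) ≠ 0 := by positivity
  constructor
  · intro hx
    set mean : ℝ := (∑ j, x j) / (r + 1) with hmean
    have hinit (i : Fin r) : x i.castSucc = mean := sub_eq_zero.mp (congrFun hx i)
    have hsum : r * mean + x (Fin.last r) = (r + 1) * mean := calc
      r * mean + x (Fin.last r) = ∑ j, x j := by simp [Fin.sum_univ_castSucc, hinit]
      _ = (r + 1) * mean := by rw [hmean, mul_div_cancel₀ _ hr]
    have hlast : x (Fin.last r) = mean := by linarith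
    refine ⟨mean, funext fun j => ?_⟩
    simpa [allOne] using Fin.lastCases hlast hinit j
  · rintro ⟨c, rfl⟩
    funext i
    simp [phi, allOne, mul_div_cancel_left₀ c hr]

theorem phi_eq_phi_iff {r : ℕ} {x y : Fin (r + 1) → ℝ} :
    phi r x = phi r y ↔ ∃ c : ℝ, x - y = c • allOne (r + 1) := by
  rw [← sub_eq_zero, ← phi_sub, phi_eq_zero_iff]

theorem statement7_general (r : ℕ) :
    Set.InjOn (phi r) ((pmCube (r + 1) : Set (Fin (r + 1) → ℝ)) \ {allOne (r + 1)}) := by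
  rintro x ⟨hx, hx_ne⟩ y ⟨hy, hy_ne⟩ hxy
  obtain ⟨c, hc⟩ := phi_eq_phi_iff.mp hxy
  have hdiff (i : Fin (r + 1)) : x i - y i = c := by simpa [allOne] using congrFun hc i
  rcases lt_trichotomy c 0 with hneg | hzero | hpos
  · exact absurd (eq_allOne_of_forall_lt hy hx fun i => by linarith [hdiff i]) hy_ne
  · exact funext fun i => sub_eq_zero.mp ((hdiff i).trans hzero)
  · exact absurd (eq_allOne_of_forall_lt hx hy fun i => by linarith [hdiff i]) hx_ne

-- STATEMENT 7
theorem statement7 (r : ℕ) :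
    Set.InjOn (phi r) ((pmCubeStar (r + 1) : Finset (Fin (r + 1) → ℝ)) : Set (Fin (r + 1) → ℝ)) := by
  rw [pmCubeStar, Finset.coe_sdiff, Finset.coe_pair]
  exact (statement7_general r).mono (Set.sdiff_subset_sdiff_right (Set.subset_insert _ _))

end
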